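/- (Operator perturbation bounds for eigenvalues and eigenvectors.) Fix j ≥ 1. Assume T is positive semidefinite with λ_1^T > λ_2^T > ⋯ > λ_j^T > λ_{j+1}^T, and that the unit eigenvectors are normalized so that ⟨e_j^G, e_j^T⟩ ≥ 0. Then |λ_j^G − λ_j^T| ≤ ‖G − T‖_L and ‖e_j^G − e_j^T‖ ≤ (2√2/ψ_j^T)·‖G − T‖_L, where ψ_j^T = min(λ_{j−1}^T − λ_j^T, λ_j^T − λ_{j+1}^T) for j ≥ 2 and ψ_1^T = λ_1^T − λ_2^T. -/

import Mathlib

/-!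
Both bounds come from Parseval's identity in the two orthonormal eigenbases.

*Eigenvalues (Weyl).* Let `A`, `B` be the two operators in either order, with nonincreasing
eigenvalues `α`, `β`. A dimension count gives `x ≠ 0` in the span of the first `j` eigenvectors
of `A` that is orthogonal to the first `j - 1` eigenvectors of `B`. Comparing Rayleigh quotients,
`α j * ‖x‖² ≤ ⟪x, A x⟫` and `⟪x, B x⟫ ≤ β j * ‖x‖²`, so `α j - β j ≤ ‖A - B‖`.

*Eigenvectors.* Write `u = eG j`, `v = eT j`, `c = ⟪u, v⟫ ∈ [0, 1]`, and let `ψ` be the gap. Since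
`T u - lamT j • u = (lamG j - lamT j) • u - (G - T) u`, its norm is at most `2 * ‖G - T‖` by the
first part. Expanding it in the basis `eT`, every coefficient of `u` other than `c` is multiplied
by a number of modulus at least `ψ`, so the squared norm is at least `ψ² * (1 - c²)`. Finally
`‖u - v‖² = 2 * (1 - c) ≤ 2 * (1 - c²)`.
-/

open MeasureTheory
open scoped RealInnerProductSpace

noncomputable section

section

variable {H : Type*} [NormedAddCommGroup H] [InnerProductSpace ℝ H]

/-- Parseval's identity for an orthonormal family with dense span. -/
lemma hasSum_inner_mul_inner_of_total [CompleteSpace H] {e : ℕ+ → H} (ho : Orthonormal ℝ e)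
    (ht : (Submodule.span ℝ (Set.range e)).topologicalClosure = ⊤) (x y : H) :
    HasSum (fun i => ⟪x, e i⟫ * ⟪e i, y⟫) ⟪x, y⟫ := by
  have h := (HilbertBasis.mk ho ht.ge).hasSum_inner_mul_inner x y
  simpa only [HilbertBasis.coe_mk] using h

lemma hasSum_inner_sq_of_total [CompleteSpace H] {e : ℕ+ → H} (ho : Orthonormal ℝ e)
    (ht : (Submodule.span ℝ (Set.range e)).topologicalClosure = ⊤) (x : H) :
    HasSum (fun i => ⟪e i, x⟫ ^ 2) (‖x‖ ^ 2) := by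
  have h := hasSum_inner_mul_inner_of_total ho ht x x
  rw [real_inner_self_eq_norm_sq] at h
  refine h.congr_fun ?_
  intro i
  rw [real_inner_comm x (e i)]; ring

lemma hasSum_rayleigh [CompleteSpace H] {A : H →L[ℝ] H} (hA : ∀ x y : H, ⟪A x, y⟫ = ⟪x, A y⟫)
    {α : ℕ+ → ℝ} {e : ℕ+ → H} (ho : Orthonormal ℝ e)
    (ht : (Submodule.span ℝ (Set.range e)).topologicalClosure = ⊤)
    (he : ∀ i, A (e i) = α i • e i) (x : H) :
    HasSum (fun i => α i * ⟪e i, x⟫ ^ 2) ⟪x, A x⟫ := by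
  refine (hasSum_inner_mul_inner_of_total ho ht x (A x)).congr_fun ?_
  intro i
  rw [← hA, he, real_inner_smul_left, real_inner_comm x (e i)]; ring

/-- Orthogonality to `b 1, …, b (j - 1)` imposes `j - 1` linear conditions on the `j`-dimensional
span of `a 1, …, a j`; at the resulting `x` the Rayleigh quotients of two operators with
eigenvectors `a` and `b` are compared. -/
lemma exists_ne_zero_orthogonal {a : ℕ+ → H} (ha : Orthonormal ℝ a) (b : ℕ+ → H) (j : ℕ+) :
    ∃ x : H, x ≠ 0 ∧ (∀ i, j < i → ⟪a i, x⟫ = 0) ∧ ∀ i, i < j → ⟪b i, x⟫ = 0 := by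
  let S : (Finset.Icc 1 j → ℝ) →ₗ[ℝ] H :=
    Fintype.linearCombination ℝ (fun i : Finset.Icc 1 j => a i)
  let L : (Finset.Icc 1 j → ℝ) →ₗ[ℝ] (Finset.Ico 1 j → ℝ) :=
    LinearMap.pi fun k => (innerSL ℝ (b k)).toLinearMap ∘ₗ S
  have hlt : Module.finrank ℝ (Finset.Ico 1 j → ℝ) < Module.finrank ℝ (Finset.Icc 1 j → ℝ) := by
    simp only [Module.finrank_fintype_fun_eq_card, Fintype.card_coe]
    refine Finset.card_lt_card (Finset.ssubset_iff_subset_ne.2 ⟨Finset.Ico_subset_Icc_self, ?_⟩)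
    intro h
    have hj : j ∈ Finset.Icc 1 j := Finset.mem_Icc.2 ⟨one_le, le_rfl⟩
    rw [← h] at hj
    simp at hj
  obtain ⟨c, hc, hc0⟩ := (Submodule.ne_bot_iff _).1
    (LinearMap.ker_ne_bot_of_finrank_lt hlt : LinearMap.ker L ≠ ⊥)
  have hS : S c = ∑ i : Finset.Icc 1 j, c i • a i := Fintype.linearCombination_apply ..
  refine ⟨S c, ?_, ?_, ?_⟩
  · intro h0
    apply hc0
    have hli := (ha.comp _ Subtype.val_injective : Orthonormal ℝ
      (fun i : Finset.Icc 1 j => a i)).linearIndependent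
    funext i
    exact Fintype.linearIndependent_iff.1 hli c (hS ▸ h0) i
  · intro i hi
    rw [hS, inner_sum]
    refine Finset.sum_eq_zero fun k _ => ?_
    have hk : i ≠ k := fun h => by
      have := (Finset.mem_Icc.1 k.2).2
      exact absurd (h ▸ hi) (not_lt.2 this)
    rw [real_inner_smul_right, ha.2 hk, mul_zero]
  · intro i hi
    exact congrFun (LinearMap.mem_ker.1 hc) ⟨i, Finset.mem_Ico.2 ⟨one_le, hi⟩⟩

/-- One half of Weyl's inequality. -/
lemma eigenvalue_sub_le [CompleteSpace H] {A B : H →L[ℝ] H}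
    (hA : ∀ x y : H, ⟪A x, y⟫ = ⟪x, A y⟫)
    (hB : ∀ x y : H, ⟪B x, y⟫ = ⟪x, B y⟫) {α β : ℕ+ → ℝ} {a b : ℕ+ → H}
    (ha : Orthonormal ℝ a) (hat : (Submodule.span ℝ (Set.range a)).topologicalClosure = ⊤)
    (hb : Orthonormal ℝ b) (hbt : (Submodule.span ℝ (Set.range b)).topologicalClosure = ⊤)
    (hAe : ∀ i, A (a i) = α i • a i) (hBe : ∀ i, B (b i) = β i • b i)
    (hα : Antitone α) (hβ : Antitone β) (j : ℕ+) : α j - β j ≤ ‖A - B‖ := by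
  obtain ⟨x, hx, hxa, hxb⟩ := exists_ne_zero_orthogonal ha b j
  have h1 : α j * ‖x‖ ^ 2 ≤ ⟪x, A x⟫ := by
    refine hasSum_le (fun i => ?_) ((hasSum_inner_sq_of_total ha hat x).mul_left (α j))
      (hasSum_rayleigh hA ha hat hAe x)
    rcases lt_or_ge j i with h | h
    · simp [hxa i h]
    · exact mul_le_mul_of_nonneg_right (hα h) (sq_nonneg _)
  have h2 : ⟪x, B x⟫ ≤ β j * ‖x‖ ^ 2 := by
    refine hasSum_le (fun i => ?_) (hasSum_rayleigh hB hb hbt hBe x)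
      ((hasSum_inner_sq_of_total hb hbt x).mul_left (β j))
    rcases lt_or_ge i j with h | h
    · simp [hxb i h]
    · exact mul_le_mul_of_nonneg_right (hβ h) (sq_nonneg _)
  have h3 : ⟪x, A x⟫ - ⟪x, B x⟫ ≤ ‖A - B‖ * ‖x‖ ^ 2 := by
    rw [← inner_sub_right, ← sub_apply]
    have := (real_inner_le_norm x ((A - B) x)).trans
      (mul_le_mul_of_nonneg_left ((A - B).le_opNorm x) (norm_nonneg x))
    linarith
  have hpos : 0 < ‖x‖ ^ 2 := by positivity
  refine le_of_mul_le_mul_right ?_ hpos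
  linarith

/-- If the other eigenvalues stay at distance at least `ψ` from `β j`, the residual `B u - β j • u`
controls the part of `u` orthogonal to the `j`-th eigenvector. -/
lemma gap_sq_mul_le [CompleteSpace H] {B : H →L[ℝ] H}
    (hB : ∀ x y : H, ⟪B x, y⟫ = ⟪x, B y⟫) {β : ℕ+ → ℝ} {b : ℕ+ → H} (hb : Orthonormal ℝ b)
    (hbt : (Submodule.span ℝ (Set.range b)).topologicalClosure = ⊤)
    (hBe : ∀ i, B (b i) = β i • b i) {j : ℕ+} {ψ : ℝ} (hψ : 0 ≤ ψ)
    (hgap : ∀ i, i ≠ j → ψ ≤ |β i - β j|) (u : H) :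
    ψ ^ 2 * (‖u‖ ^ 2 - ⟪b j, u⟫ ^ 2) ≤ ‖B u - β j • u‖ ^ 2 := by
  -- Removing the `j`-th term from Parseval's sum for `‖u‖ ^ 2`.
  have h1 := ((hasSum_inner_sq_of_total hb hbt u).sub
    (hasSum_ite_eq j (⟪b j, u⟫ ^ 2))).mul_left (ψ ^ 2)
  refine hasSum_le (fun i => ?_) h1 (hasSum_inner_sq_of_total hb hbt (B u - β j • u))
  have hi : ⟪b i, B u - β j • u⟫ = (β i - β j) * ⟪b i, u⟫ := by
    rw [inner_sub_right, ← hB, hBe, real_inner_smul_left, real_inner_smul_right]; ring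
  rw [hi]
  split_ifs with h
  · subst h; simp
  · rw [sub_zero, mul_pow, ← sq_abs (β i - β j)]
    exact mul_le_mul_of_nonneg_right (pow_le_pow_left₀ hψ (hgap i h) 2) (sq_nonneg _)

lemma norm_sub_le_of_gap {u v : H} (hu : ‖u‖ = 1) (hv : ‖v‖ = 1) (hc : 0 ≤ ⟪u, v⟫) {ψ r : ℝ}
    (hψ : 0 < ψ) (hr : 0 ≤ r) (h : ψ ^ 2 * (1 - ⟪u, v⟫ ^ 2) ≤ (2 * r) ^ 2) :
    ‖u - v‖ ≤ 2 * Real.sqrt 2 / ψ * r := by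
  have hc1 : ⟪u, v⟫ ≤ 1 := by simpa [hu, hv] using real_inner_le_norm u v
  have hn : ‖u - v‖ ^ 2 = 2 * (1 - ⟪u, v⟫) := by
    rw [norm_sub_sq_real, hu, hv]; ring
  rw [div_mul_eq_mul_div, le_div_iff₀ hψ]
  refine le_of_sq_le_sq ?_ (by positivity)
  have h2 : 1 - ⟪u, v⟫ ≤ 1 - ⟪u, v⟫ ^ 2 := by nlinarith
  calc (‖u - v‖ * ψ) ^ 2 = 2 * (ψ ^ 2 * (1 - ⟪u, v⟫)) := by rw [mul_pow, hn]; ring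
    _ ≤ 2 * (ψ ^ 2 * (1 - ⟪u, v⟫ ^ 2)) := by gcongr
    _ ≤ 2 * (2 * r) ^ 2 := by gcongr
    _ = (2 * Real.sqrt 2 * r) ^ 2 := by
      rw [mul_pow, mul_pow, mul_pow, Real.sq_sqrt zero_le_two]; ring

end

/-- Operator perturbation bounds for eigenvalues and eigenvectors (Lemmas 1.1 / 7.10):
`G` and `T` are self-adjoint compact Hilbert–Schmidt operators on a real Hilbert space,
diagonalized by the orthonormal bases `(eG i)_{i ∈ ℕ+}`, `(eT i)_{i ∈ ℕ+}` with
eigenvalues listed in nonincreasing order (repeated by multiplicity); `T` is positive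
semidefinite with `λ₁^T > ⋯ > λ_{j+1}^T`, and the eigenvectors are normalized so that
`⟨e_j^G, e_j^T⟩ ≥ 0`.  Then `|λ_j^G − λ_j^T| ≤ ‖G − T‖` and
`‖e_j^G − e_j^T‖ ≤ (2√2/ψ_j^T)·‖G − T‖`. -/
theorem operator_perturbation_eigen
    {H : Type*} [NormedAddCommGroup H] [InnerProductSpace ℝ H] [CompleteSpace H]
    (G T : H →L[ℝ] H)
    (hGsym : ∀ x y : H, ⟪G x, y⟫ = ⟪x, G y⟫)
    (hTsym : ∀ x y : H, ⟪T x, y⟫ = ⟪x, T y⟫)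
    (hGcomp : IsCompactOperator G) (hTcomp : IsCompactOperator T)
    (lamG lamT : ℕ+ → ℝ) (eG eT : ℕ+ → H)
    (hGorth : Orthonormal ℝ eG)
    (hGtotal : (Submodule.span ℝ (Set.range eG)).topologicalClosure = ⊤)
    (hTorth : Orthonormal ℝ eT)
    (hTtotal : (Submodule.span ℝ (Set.range eT)).topologicalClosure = ⊤)
    (hGeig : ∀ i, G (eG i) = lamG i • eG i)
    (hTeig : ∀ i, T (eT i) = lamT i • eT i)
    (hGanti : ∀ i i' : ℕ+, i ≤ i' → lamG i' ≤ lamG i)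
    (hTanti : ∀ i i' : ℕ+, i ≤ i' → lamT i' ≤ lamT i)
    (hGHS : Summable fun i => lamG i ^ 2)
    (hTHS : Summable fun i => lamT i ^ 2)
    (hTpos : ∀ x : H, 0 ≤ ⟪T x, x⟫)
    (j : ℕ+)
    (hgap : ∀ i : ℕ+, i ≤ j → lamT (i + 1) < lamT i)
    (hsign : 0 ≤ ⟪eG j, eT j⟫) :
    |lamG j - lamT j| ≤ ‖G - T‖ ∧
      ‖eG j - eT j‖ ≤
        2 * Real.sqrt 2 /
            (if j = 1 then lamT 1 - lamT 2
              else min (lamT (j - 1) - lamT j) (lamT j - lamT (j + 1))) *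
          ‖G - T‖ := by
  have hw : |lamG j - lamT j| ≤ ‖G - T‖ := by
    refine abs_sub_le_iff.2 ⟨?_, ?_⟩
    · exact eigenvalue_sub_le hGsym hTsym hGorth hGtotal hTorth hTtotal hGeig hTeig hGanti hTanti j
    · rw [norm_sub_rev]
      exact eigenvalue_sub_le hTsym hGsym hTorth hTtotal hGorth hGtotal hTeig hGeig hTanti hGanti j
  refine ⟨hw, ?_⟩
  set ψ : ℝ := if j = 1 then lamT 1 - lamT 2
    else min (lamT (j - 1) - lamT j) (lamT j - lamT (j + 1)) with hψdef
  have hpred : j ≠ 1 → j - 1 + 1 = j := fun h =>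
    PNat.sub_add_of_lt (lt_of_le_of_ne one_le (Ne.symm h))
  have hψle : ψ ≤ lamT j - lamT (j + 1) := by
    rw [hψdef]
    split_ifs with h
    · subst h; exact le_rfl
    · exact min_le_right _ _
  have hψ : 0 < ψ := by
    have hj := hgap j le_rfl
    rw [hψdef]
    split_ifs with h
    · subst h; exact sub_pos.2 hj
    · refine lt_min (sub_pos.2 ?_) (sub_pos.2 hj)
      have hlt : j - 1 < j := by
        conv_rhs => rw [← hpred h]
        exact PNat.lt_add_right _ _
      simpa only [hpred h] using hgap (j - 1) hlt.le
  have hsep : ∀ i, i ≠ j → ψ ≤ |lamT i - lamT j| := by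
    intro i hi
    rcases lt_or_gt_of_ne hi with h | h
    · have hj1 : j ≠ 1 := fun h1 => absurd (h1 ▸ h) not_lt_one
      have hle : i ≤ j - 1 := by
        rw [← PNat.lt_add_one_iff, hpred hj1]; exact h
      have h1 : ψ ≤ lamT (j - 1) - lamT j := by
        rw [hψdef, if_neg hj1]; exact min_le_left _ _
      have h2 := hTanti i (j - 1) hle
      exact le_trans (by linarith) (le_abs_self _)
    · have h2 := hTanti (j + 1) i (PNat.add_one_le_iff.2 h)
      exact le_trans (by linarith) (neg_le_abs _)
  have hu : ‖eG j‖ = 1 := hGorth.1 j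
  have hres : ‖T (eG j) - lamT j • eG j‖ ≤ 2 * ‖G - T‖ := by
    have h1 : T (eG j) - lamT j • eG j = (lamG j - lamT j) • eG j - (G - T) (eG j) := by
      rw [sub_apply, hGeig, sub_smul]; abel
    have h2 : ‖(lamG j - lamT j) • eG j‖ ≤ ‖G - T‖ := by
      rw [norm_smul, hu, mul_one, Real.norm_eq_abs]; exact hw
    have h3 : ‖(G - T) (eG j)‖ ≤ ‖G - T‖ := by
      simpa only [hu, mul_one] using (G - T).le_opNorm (eG j)
    rw [h1]
    have := norm_sub_le ((lamG j - lamT j) • eG j) ((G - T) (eG j))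
    linarith
  refine norm_sub_le_of_gap hu (hTorth.1 j) hsign hψ (norm_nonneg _) ?_
  have h := gap_sq_mul_le hTsym hTorth hTtotal hTeig hψ.le hsep (eG j)
  rw [hu, one_pow, real_inner_comm] at h
  exact h.trans (pow_le_pow_left₀ (norm_nonneg _) hres 2)

end
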